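/- (Rate of convergence in the SLLN for the RWG.) Suppose p > 0. Then almost surely ‖S_n/n − μ − (p/(2−p))·m‖² = O((log n)/n) as n → ∞; that is, almost surely there exist C>0 and N such that for all n ≥ N, ‖S_n/n − μ − (p/(2−p))·m‖² ≤ C (log n)/n. -/

import Mathlib

open MeasureTheory ProbabilityTheory Real Filter Set
open scoped BigOperators NNReal

noncomputable section

namespace RWG

abbrev E : Type := EuclideanSpace ℝ (Fin 3)

def vec (x y z : ℝ) : E := (EuclideanSpace.equiv (Fin 3) ℝ).symm ![x, y, z]

/-- The four families of vertices of the `2h` graphite lattice. -/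
def V (a h : ℝ) (i j : Fin 2) : Set E :=
  {v | ∃ k l n : ℤ, v =
    vec (a * ((-1 : ℝ) ^ ((i : ℕ) + 1) * (if j = 1 then (1 : ℝ) else 0) + (3 / 2) * k))
        (a * ((Real.sqrt 3 / 2) * k + Real.sqrt 3 * l))
        (h * (2 * n + (if i ≠ j then (1 : ℝ) else 0)))}

/-- Horizontal jump from a vertex of horizontal type `i` in direction `k`. -/
def w (a : ℝ) (i : Fin 2) (k : Fin 3) : E :=
  vec (a * Real.cos (2 * (k : ℕ) * π / 3 + (i : ℕ) * π))
      (a * Real.sin (2 * (k : ℕ) * π / 3 + (i : ℕ) * π)) 0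

/-- `S` is a random walk on graphite with parameters `a, h, p, α, q` and natural filtration `F`. -/
structure IsRWG {Ω : Type} [MeasurableSpace Ω] (P : Measure Ω)
    (a h p α : ℝ) (q : Fin 2 → Fin 2 → Fin 3 → ℝ)
    (S : ℕ → Ω → E) (F : ℕ → MeasurableSpace Ω) : Prop where
  prob : IsProbabilityMeasure P
  ha : 0 < a
  hh : 0 < h
  hp0 : 0 ≤ p
  hp1 : p ≤ 1
  hα0 : 0 < α
  hα1 : α < 1
  hq : ∀ i j k, 0 ≤ q i j k
  hqsum0 : ∀ i, q i 0 0 + q i 0 1 + q i 0 2 = 1 - p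
  hqsum1 : ∀ i, q i 1 0 + q i 1 1 + q i 1 2 = 1
  hS0 : ∀ ω, S 0 ω = 0
  hSmeas : ∀ n, Measurable (S n)
  hF : ∀ n, F n =
    MeasurableSpace.comap (fun ω (k : Fin n) => S ((k : ℕ) + 1) ω - S (k : ℕ) ω)
      MeasurableSpace.pi
  hTrans : ∀ (n : ℕ) (f : E → ℝ), Measurable f → (∃ C, ∀ x, |f x| ≤ C) →
    P[fun ω => f (S (n + 1) ω)|F n] =ᵐ[P]
      fun ω => ∑ i : Fin 2,
        ((V a h i 0).indicator (fun _ => (1 : ℝ)) (S n ω) *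
          (α * p * f (S n ω + vec 0 0 h) + (1 - α) * p * f (S n ω + vec 0 0 (-h)) +
            ∑ k : Fin 3, q i 0 k * f (S n ω + w a i k)) +
        (V a h i 1).indicator (fun _ => (1 : ℝ)) (S n ω) *
          ∑ k : Fin 3, q i 1 k * f (S n ω + w a i k))

def uu (q : Fin 2 → Fin 2 → Fin 3 → ℝ) (i j : Fin 2) : ℝ := q i j 1 + q i j 2

def vv (q : Fin 2 → Fin 2 → Fin 3 → ℝ) (i j : Fin 2) : ℝ := q i j 1 - q i j 2

def ss (q : Fin 2 → Fin 2 → Fin 3 → ℝ) (i j : Fin 2) : ℝ := uu q i j * (1 - uu q i j)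

def tt (q : Fin 2 → Fin 2 → Fin 3 → ℝ) (i j : Fin 2) : ℝ := vv q i j * (uu q i j - 1)

/-- The vector `μ` of the RWG. -/
def muG (a h p α : ℝ) (q : Fin 2 → Fin 2 → Fin 3 → ℝ) : E :=
  vec (3 * a / 8 * (-(uu q 0 0 + uu q 0 1) + (uu q 1 0 + uu q 1 1)))
      (a * Real.sqrt 3 / 8 * ((vv q 0 0 + vv q 0 1) - (vv q 1 0 + vv q 1 1)))
      (h * p / 2 * (2 * α - 1))

/-- The vector `m` of the RWG. -/
def mG (a h p α : ℝ) (q : Fin 2 → Fin 2 → Fin 3 → ℝ) : E :=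
  vec (3 * a / 8 * (-(uu q 0 0 - uu q 0 1) + (uu q 1 0 - uu q 1 1)))
      (a * Real.sqrt 3 / 8 * ((vv q 0 0 - vv q 0 1) - (vv q 1 0 - vv q 1 1)))
      (h * p / 2 * (2 * α - 1))

/-- The vector `θ` of the RWG. -/
def thetaG (a p : ℝ) (q : Fin 2 → Fin 2 → Fin 3 → ℝ) : E :=
  vec (a * ((1 - p / 2) - 3 / 8 * ((uu q 0 0 + uu q 0 1) + (uu q 1 0 + uu q 1 1))))
      (a * Real.sqrt 3 / 8 * ((vv q 0 0 + vv q 0 1) + (vv q 1 0 + vv q 1 1))) 0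

/-- The vector `ρ` of the RWG. -/
def rhoG (a p : ℝ) (q : Fin 2 → Fin 2 → Fin 3 → ℝ) : E :=
  vec (a * (-(p / 2) - 3 / 8 * ((uu q 0 0 - uu q 0 1) + (uu q 1 0 - uu q 1 1))))
      (a * Real.sqrt 3 / 8 * ((vv q 0 0 - vv q 0 1) + (vv q 1 0 - vv q 1 1))) 0

/-- The vector `ζ = (0, 0, hp(2α−1))`. -/
def zetaG (h p α : ℝ) : E := vec 0 0 (h * p * (2 * α - 1))

/-- The indicator process `i_n`. -/
def iP {Ω : Type} (a h : ℝ) (S : ℕ → Ω → E) (n : ℕ) (ω : Ω) : ℝ :=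
  (V a h 0 0 ∪ V a h 0 1).indicator (fun _ => (1 : ℝ)) (S n ω) -
    (V a h 1 0 ∪ V a h 1 1).indicator (fun _ => (1 : ℝ)) (S n ω)

/-- The indicator process `j_n`. -/
def jP {Ω : Type} (a h : ℝ) (S : ℕ → Ω → E) (n : ℕ) (ω : Ω) : ℝ :=
  (V a h 0 0 ∪ V a h 1 0).indicator (fun _ => (1 : ℝ)) (S n ω) -
    (V a h 0 1 ∪ V a h 1 1).indicator (fun _ => (1 : ℝ)) (S n ω)

/-- The indicator process `k_n`. -/
def kP {Ω : Type} (a h : ℝ) (S : ℕ → Ω → E) (n : ℕ) (ω : Ω) : ℝ :=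
  (V a h 0 0 ∪ V a h 1 1).indicator (fun _ => (1 : ℝ)) (S n ω) -
    (V a h 0 1 ∪ V a h 1 0).indicator (fun _ => (1 : ℝ)) (S n ω)

/-- The matrix `σ²` of the RWG. -/
def sigmaG (a h p α : ℝ) (q : Fin 2 → Fin 2 → Fin 3 → ℝ) : Matrix (Fin 3) (Fin 3) ℝ :=
  !![a ^ 2 / 4 * (2 * p * (1 - p) + 9 / 4 * (ss q 0 0 + ss q 1 0 + ss q 0 1 + ss q 1 1)
        - 3 * p * (uu q 0 0 + uu q 1 0)),
     a ^ 2 * Real.sqrt 3 / 16 * (3 * (tt q 0 0 + tt q 1 0 + tt q 0 1 + tt q 1 1)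
        + 2 * p * (vv q 0 0 + vv q 1 0)),
     a * h / 8 * (-4 * p * (1 - p) * (2 * α - 1)
        + 3 * p * (2 * α - 1) * (uu q 0 0 + uu q 1 0));
     a ^ 2 * Real.sqrt 3 / 16 * (3 * (tt q 0 0 + tt q 1 0 + tt q 0 1 + tt q 1 1)
        + 2 * p * (vv q 0 0 + vv q 1 0)),
     3 * a ^ 2 / 16 * ((uu q 0 0 + uu q 1 0 + uu q 0 1 + uu q 1 1)
        - ((vv q 0 0) ^ 2 + (vv q 1 0) ^ 2 + (vv q 0 1) ^ 2 + (vv q 1 1) ^ 2)),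
     -(a * h * Real.sqrt 3 / 8) * (p * (2 * α - 1) * (vv q 0 0 + vv q 1 0));
     a * h / 8 * (-4 * p * (1 - p) * (2 * α - 1)
        + 3 * p * (2 * α - 1) * (uu q 0 0 + uu q 1 0)),
     -(a * h * Real.sqrt 3 / 8) * (p * (2 * α - 1) * (vv q 0 0 + vv q 1 0)),
     h ^ 2 * p / 2 * (1 - p * (2 * α - 1) ^ 2)]

/-- The matrix `γ` of the RWG. -/
def gammaG (a h p α : ℝ) (q : Fin 2 → Fin 2 → Fin 3 → ℝ) : Matrix (Fin 3) (Fin 3) ℝ :=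
  !![a ^ 2 / 4 * (2 * p * (1 - p) + 9 / 4 * (ss q 0 0 + ss q 1 0 - ss q 0 1 - ss q 1 1)
        - 3 * p * (uu q 0 0 + uu q 1 0)),
     a ^ 2 * Real.sqrt 3 / 16 * (3 * (tt q 0 0 + tt q 1 0 - tt q 0 1 - tt q 1 1)
        + 2 * p * (vv q 0 0 + vv q 1 0)),
     a * h / 8 * (-4 * p * (1 - p) * (2 * α - 1)
        + 3 * p * (2 * α - 1) * (uu q 0 0 + uu q 1 0));
     a ^ 2 * Real.sqrt 3 / 16 * (3 * (tt q 0 0 + tt q 1 0 - tt q 0 1 - tt q 1 1)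
        + 2 * p * (vv q 0 0 + vv q 1 0)),
     3 * a ^ 2 / 16 * ((uu q 0 0 + uu q 1 0 - uu q 0 1 - uu q 1 1)
        - ((vv q 0 0) ^ 2 + (vv q 1 0) ^ 2 - (vv q 0 1) ^ 2 - (vv q 1 1) ^ 2)),
     -(a * h * Real.sqrt 3 / 8) * (p * (2 * α - 1) * (vv q 0 0 + vv q 1 0));
     a * h / 8 * (-4 * p * (1 - p) * (2 * α - 1)
        + 3 * p * (2 * α - 1) * (uu q 0 0 + uu q 1 0)),
     -(a * h * Real.sqrt 3 / 8) * (p * (2 * α - 1) * (vv q 0 0 + vv q 1 0)),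
     h ^ 2 * p / 2 * (1 - p * (2 * α - 1) ^ 2)]

/-- The matrix `δ` of the RWG. -/
def deltaG (a h p α : ℝ) (q : Fin 2 → Fin 2 → Fin 3 → ℝ) : Matrix (Fin 3) (Fin 3) ℝ :=
  !![a ^ 2 / 4 * (9 / 4 * (ss q 0 0 - ss q 1 0 - ss q 0 1 + ss q 1 1)
        - 3 * p * (uu q 0 0 - uu q 1 0)),
     a ^ 2 * Real.sqrt 3 / 16 * (3 * (tt q 0 0 - tt q 1 0 - tt q 0 1 + tt q 1 1)
        + 2 * p * (vv q 0 0 - vv q 1 0)),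
     a * h / 8 * (3 * p * (2 * α - 1) * (uu q 0 0 - uu q 1 0));
     a ^ 2 * Real.sqrt 3 / 16 * (3 * (tt q 0 0 - tt q 1 0 - tt q 0 1 + tt q 1 1)
        + 2 * p * (vv q 0 0 - vv q 1 0)),
     3 * a ^ 2 / 16 * ((uu q 0 0 - uu q 1 0 - uu q 0 1 + uu q 1 1)
        - ((vv q 0 0) ^ 2 - (vv q 1 0) ^ 2 - (vv q 0 1) ^ 2 + (vv q 1 1) ^ 2)),
     -(a * h * Real.sqrt 3 / 8) * (p * (2 * α - 1) * (vv q 0 0 - vv q 1 0));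
     a * h / 8 * (3 * p * (2 * α - 1) * (uu q 0 0 - uu q 1 0)),
     -(a * h * Real.sqrt 3 / 8) * (p * (2 * α - 1) * (vv q 0 0 - vv q 1 0)),
     0]

/-- A probability measure on `ℝ³` is the centered Gaussian law with covariance matrix `Γ`
if every linear functional pushes it to the corresponding one-dimensional Gaussian law. -/
def IsCenteredGaussian (G : Measure E) (Γ : Matrix (Fin 3) (Fin 3) ℝ) : Prop :=
  IsProbabilityMeasure G ∧
    ∀ u : Fin 3 → ℝ, G.map (fun x => ∑ r, u r * x r) =
      gaussianReal 0 (Real.toNNReal (∑ r, ∑ c, u r * Γ r c * u c))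

/-- View a point of `ℝ³` as a plain function on indices. -/
def toFun (x : E) : Fin 3 → ℝ := x

end RWG

/-!
The vertex type `(i, j)` of the walk is a finite Markov chain with stationary law proportional to
`1` at the types `(i, 0)` and to `1 - p` at the types `(i, 1)`; averaging the drift over it gives
the velocity `μ + (p / (2 - p)) m`. For `p > 0` the Poisson equation of this chain is solvable, so
each coordinate becomes a martingale with bounded increments once a bounded function of the type
is added and `n` times the velocity subtracted. By Azuma–Hoeffding and Borel–Cantelli such a
martingale is almost surely `O(√(n log n))`.
-/

section Martingale

variable {Ω : Type*} {m mΩ : MeasurableSpace Ω} {P : Measure Ω}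

lemma exp_mul_le_cosh_add_sinh_div_mul {K x : ℝ} (hx : |x| ≤ K) (t : ℝ) :
    exp (t * x) ≤ cosh (t * K) + sinh (t * K) / K * x := by
  rcases ((abs_nonneg x).trans hx).eq_or_lt with rfl | hK
  · simp [abs_nonpos_iff.1 hx]
  · have hdiv : |x / K| ≤ 1 := by rwa [abs_div, abs_of_pos hK, div_le_one hK]
    convert! Real.exp_mul_le_cosh_add_mul_sinh hdiv (t * K) using 2 <;> field_simp

lemma integral_mul_eq_zero_of_condExp_eq_zero (hm : m ≤ mΩ) [SigmaFinite (P.trim hm)]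
    {Z D : Ω → ℝ} (hZ : StronglyMeasurable[m] Z) (hZD : Integrable (fun ω => Z ω * D ω) P)
    (hDi : Integrable D P) (hD : P[D | m] =ᵐ[P] 0) :
    ∫ ω, Z ω * D ω ∂P = 0 := by
  rw [← integral_condExp hm]
  refine integral_eq_zero_of_ae ?_
  filter_upwards [condExp_mul_of_stronglyMeasurable_left hZ hZD hDi, hD] with ω hpull hω
  exact hpull.trans (by simp [hω])

lemma hasSubgaussianMGF_add_of_condExp_eq_zero [IsFiniteMeasure P] (hm : m ≤ mΩ)
    {X D : Ω → ℝ} {c K : ℝ≥0} (hX : HasSubgaussianMGF X c P) (hXm : Measurable[m] X)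
    (hDm : AEStronglyMeasurable D P) (hDK : ∀ᵐ ω ∂P, |D ω| ≤ K) (hD : P[D | m] =ᵐ[P] 0) :
    HasSubgaussianMGF (X + D) (c + K ^ 2) P := by
  have hXi := hX.integrable_exp_mul
  have hDi : Integrable D P := .of_bound hDm K hDK
  have hXD (t : ℝ) : Integrable (fun ω => exp (t * X ω) * D ω) P :=
    (hXi t).mul_bdd hDm hDK
  have horth (t : ℝ) : ∫ ω, exp (t * X ω) * D ω ∂P = 0 :=
    integral_mul_eq_zero_of_condExp_eq_zero hm
      (measurable_exp.comp (hXm.const_mul t)).stronglyMeasurable (hXD t) hDi hD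
  have hbound (t : ℝ) : ∀ᵐ ω ∂P, exp (t * (X + D) ω) ≤
      cosh (t * K) * exp (t * X ω) + sinh (t * K) / K * (exp (t * X ω) * D ω) := by
    filter_upwards [hDK] with ω hω
    calc exp (t * (X + D) ω) = exp (t * X ω) * exp (t * D ω) := by
          rw [← exp_add, Pi.add_apply, mul_add]
      _ ≤ exp (t * X ω) * (cosh (t * K) + sinh (t * K) / K * D ω) := by
          gcongr; exact exp_mul_le_cosh_add_sinh_div_mul hω t
      _ = _ := by ring
  have hboundi (t : ℝ) := ((hXi t).const_mul (cosh (t * K))).add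
    ((hXD t).const_mul (sinh (t * K) / K))
  refine ⟨fun t => (hboundi t).mono' ?_ ?_, fun t => ?_⟩
  · have := hX.aemeasurable
    have := hDm.aemeasurable
    exact (by fun_prop : AEMeasurable (fun ω => exp (t * (X + D) ω)) P).aestronglyMeasurable
  · simpa [Real.norm_eq_abs] using hbound t
  · calc mgf (X + D) P t
        ≤ ∫ ω, (cosh (t * K) * exp (t * X ω) + sinh (t * K) / K * (exp (t * X ω) * D ω)) ∂P :=
          integral_mono_of_nonneg (.of_forall fun _ => (exp_pos _).le) (hboundi t) (hbound t)
      _ = cosh (t * K) * mgf X P t := by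
          rw [integral_add ((hXi t).const_mul _) ((hXD t).const_mul _), integral_const_mul,
            integral_const_mul, horth, mul_zero, add_zero, mgf]
      _ ≤ exp ((t * K) ^ 2 / 2) * exp (c * t ^ 2 / 2) := by
          gcongr
          · exact mgf_nonneg
          · exact Real.cosh_le_exp_half_sq _
          · exact hX.mgf_le t
      _ = exp ((c + K ^ 2 : ℝ≥0) * t ^ 2 / 2) := by
          rw [← exp_add]; push_cast; ring_nf

/-- The **Azuma–Hoeffding inequality**. Unlike for `HasCondSubgaussianMGF`, which is defined through
the conditional distribution, `Ω` need not be a standard Borel space. -/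
theorem hasSubgaussianMGF_sub_zero_of_martingale [IsProbabilityMeasure P]
    {ℱ : Filtration ℕ mΩ} {M : ℕ → Ω → ℝ} {K : ℝ≥0} (hM : Martingale M ℱ P)
    (hMK : ∀ n, ∀ᵐ ω ∂P, |M (n + 1) ω - M n ω| ≤ K) (n : ℕ) :
    HasSubgaussianMGF (M n - M 0) (n * K ^ 2) P := by
  induction n with
  | zero => simp
  | succ n ih =>
    have hdiff : P[M (n + 1) - M n | ℱ n] =ᵐ[P] 0 := by
      filter_upwards [condExp_sub (hM.integrable (n + 1)) (hM.integrable n) (ℱ n),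
        hM.condExp_ae_eq n.le_succ, hM.condExp_ae_eq le_rfl] with ω hsub hsucc hself
      rw [hsub, Pi.sub_apply, hsucc, hself, sub_self, Pi.zero_apply]
    have hmeas : Measurable[ℱ n] (M n - M 0) :=
      ((hM.stronglyMeasurable n).sub
        ((hM.stronglyMeasurable 0).mono (ℱ.mono n.zero_le))).measurable
    convert! hasSubgaussianMGF_add_of_condExp_eq_zero (ℱ.le n) ih hmeas
      ((hM.integrable (n + 1)).sub (hM.integrable n)).aestronglyMeasurable (hMK n) hdiff using 1
    · abel
    · push_cast; ring

lemma measureReal_two_mul_mul_lt_sq_le_of_hasSubgaussianMGF [IsFiniteMeasure P]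
    {X : Ω → ℝ} {c : ℝ≥0} (hX : HasSubgaussianMGF X c P) {s : ℝ} (hs : 0 ≤ s) :
    P.real {ω | 2 * c * s < X ω ^ 2} ≤ 2 * exp (-s) := by
  rcases eq_zero_or_pos c with rfl | hc
  · have hnull : P.real {ω | 2 * (0 : ℝ≥0) * s < X ω ^ 2} = 0 := by
      rw [measureReal_eq_zero_iff, measure_eq_zero_iff_ae_notMem]
      filter_upwards [hX.ae_eq_zero_of_hasSubgaussianMGF_zero] with ω hω
      simp [hω]
    rw [hnull]
    positivity
  · set ε := √(2 * c * s)
    have hε : -ε ^ 2 / (2 * c) = -s := by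
      rw [sq_sqrt (by positivity)]
      field_simp
    calc P.real {ω | 2 * c * s < X ω ^ 2}
        ≤ P.real ({ω | ε ≤ X ω} ∪ {ω | ε ≤ (-X) ω}) :=
          measureReal_mono fun ω hω => le_abs.1 ((sqrt_lt_sqrt (by positivity) hω).le.trans_eq
            (sqrt_sq_eq_abs _))
      _ ≤ P.real {ω | ε ≤ X ω} + P.real {ω | ε ≤ (-X) ω} := measureReal_union_le _ _
      _ ≤ exp (-s) + exp (-s) := by
          rw [← hε]
          exact add_le_add (hX.measure_ge_le (sqrt_nonneg _))
            (hX.neg.measure_ge_le (sqrt_nonneg _))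
      _ = 2 * exp (-s) := (two_mul _).symm

lemma ae_eventually_sq_le_mul_log_of_hasSubgaussianMGF [IsFiniteMeasure P] {X : ℕ → Ω → ℝ}
    {c : ℕ → ℝ≥0} (hX : ∀ n, HasSubgaussianMGF (X n) (c n) P) :
    ∀ᵐ ω ∂P, ∀ᶠ n in atTop, X n ω ^ 2 ≤ 4 * c n * log n := by
  have htail {n : ℕ} (hn : 0 < n) :
      P.real {ω | 4 * c n * log n < X n ω ^ 2} ≤ 2 * ((n : ℝ) ^ 2)⁻¹ :=
    calc P.real {ω | 4 * c n * log n < X n ω ^ 2}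
        = P.real {ω | 2 * c n * (2 * log n) < X n ω ^ 2} := by ring_nf
      _ ≤ 2 * exp (-(2 * log n)) :=
          measureReal_two_mul_mul_lt_sq_le_of_hasSubgaussianMGF (hX n) (by positivity)
      _ = 2 * ((n : ℝ) ^ 2)⁻¹ := by
          rw [exp_neg, show 2 * log (n : ℝ) = log ((n : ℝ) ^ 2) by simp, exp_log (by positivity)]
  have hsum : Summable fun n : ℕ => P.real {ω | 4 * c n * log n < X n ω ^ 2} := by
    refine .of_norm_bounded_eventually_nat ((Real.summable_nat_pow_inv.2 one_lt_two).mul_left 2) ?_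
    filter_upwards [eventually_gt_atTop 0] with n hn
    simpa [norm_of_nonneg measureReal_nonneg] using htail hn
  have hfin : ∑' n : ℕ, P {ω | 4 * c n * log n < X n ω ^ 2} ≠ ⊤ := by
    simpa [ofReal_measureReal] using hsum.tsum_ofReal_ne_top
  filter_upwards [ae_eventually_notMem hfin] with ω hω
  filter_upwards [hω] with n hn using not_lt.1 hn

lemma tendsto_sqrt_natCast_mul_log_atTop :
    Tendsto (fun n : ℕ => √(n * log n)) atTop atTop :=
  tendsto_sqrt_atTop.comp <| tendsto_natCast_atTop_atTop.atTop_mul_atTop₀ <|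
    tendsto_log_atTop.comp tendsto_natCast_atTop_atTop

lemma isBigO_const_sqrt_natCast_mul_log (b : ℝ) :
    (fun _ : ℕ => b) =O[atTop] fun n : ℕ => √(n * log n) :=
  (Asymptotics.isLittleO_const_left.2 <| .inr <|
    tendsto_norm_atTop_atTop.comp tendsto_sqrt_natCast_mul_log_atTop).isBigO

theorem ae_isBigO_sqrt_mul_log_of_martingale [IsProbabilityMeasure P] {ℱ : Filtration ℕ mΩ}
    {M : ℕ → Ω → ℝ} {K : ℝ≥0} (hM : Martingale M ℱ P)
    (hMK : ∀ n, ∀ᵐ ω ∂P, |M (n + 1) ω - M n ω| ≤ K) :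
    ∀ᵐ ω ∂P, (M · ω) =O[atTop] fun n : ℕ => √(n * log n) := by
  filter_upwards [ae_eventually_sq_le_mul_log_of_hasSubgaussianMGF
    (hasSubgaussianMGF_sub_zero_of_martingale hM hMK)] with ω hω
  have hdiff : (fun n => M n ω - M 0 ω) =O[atTop] fun n : ℕ => √(n * log n) := by
    refine .of_bound (2 * K) ?_
    filter_upwards [hω] with n hn
    rw [norm_of_nonneg (sqrt_nonneg _), norm_eq_abs]
    have hnlog : 0 ≤ n * log n := mul_nonneg n.cast_nonneg (log_natCast_nonneg n)
    refine abs_le_of_sq_le_sq ?_ (by positivity)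
    calc (M n ω - M 0 ω) ^ 2 ≤ 4 * (n * K ^ 2 : ℝ≥0) * log n := hn
      _ = (2 * K * √(n * log n)) ^ 2 := by
          rw [mul_pow, sq_sqrt hnlog]; push_cast; ring
  simpa using hdiff.add (isBigO_const_sqrt_natCast_mul_log (M 0 ω))

end Martingale

namespace RWG

section Lattice

variable {a h : ℝ} {i j : Fin 2} {x : E}

@[simp] lemma vec_apply_zero (x y z : ℝ) : vec x y z 0 = x := rfl

@[simp] lemma vec_apply_one (x y z : ℝ) : vec x y z 1 = y := rfl

@[simp] lemma vec_apply_two (x y z : ℝ) : vec x y z 2 = z := rfl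

lemma norm_vec (x y z : ℝ) : ‖vec x y z‖ = √(x ^ 2 + y ^ 2 + z ^ 2) := by
  simp [EuclideanSpace.norm_eq, Fin.sum_univ_three]

/-- The first coordinate, in units of `a` and modulo `3 / 2`, of the vertices in `V a h i j`. -/
def offset (i j : Fin 2) : ℤ := if j = 1 then (if i = 0 then -1 else 1) else 0

/-- The parity of the height, in units of `h`, of the vertices in `V a h i j`. -/
def layer (i j : Fin 2) : ℤ := if i ≠ j then 1 else 0

lemma mem_V_iff :
    x ∈ V a h i j ↔ ∃ k l n : ℤ, x 0 = a * (offset i j + 3 / 2 * k) ∧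
      x 1 = a * (√3 / 2 * k + √3 * l) ∧ x 2 = h * (2 * n + layer i j) := by
  have hoffset : (offset i j : ℝ) = (-1) ^ ((i : ℕ) + 1) * (if j = 1 then 1 else 0) := by
    fin_cases i <;> fin_cases j <;> simp [offset]
  have hlayer : (layer i j : ℝ) = if i ≠ j then 1 else 0 := by simp [layer]
  rw [hoffset, hlayer]
  constructor
  · rintro ⟨k, l, n, rfl⟩
    exact ⟨k, l, n, rfl, rfl, rfl⟩
  · rintro ⟨k, l, n, h0, h1, h2⟩
    refine ⟨k, l, n, ?_⟩
    ext r
    fin_cases r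
    exacts [h0, h1, h2]

lemma eq_of_mem_V_of_mem_V (ha : a ≠ 0) (hh : h ≠ 0) {i' j' : Fin 2}
    (hx : x ∈ V a h i j) (hx' : x ∈ V a h i' j') : i = i' ∧ j = j' := by
  obtain ⟨k, l, n, h0, -, h2⟩ := mem_V_iff.1 hx
  obtain ⟨k', l', n', h0', -, h2'⟩ := mem_V_iff.1 hx'
  have hoffset : 2 * offset i j + 3 * k = 2 * offset i' j' + 3 * k' := by
    have := mul_left_cancel₀ ha (h0.symm.trans h0')
    exact_mod_cast (by linarith : (2 * offset i j + 3 * k : ℝ) = 2 * offset i' j' + 3 * k')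
  have hlayer : 2 * n + layer i j = 2 * n' + layer i' j' := by
    have : (2 * n + layer i j : ℝ) = 2 * n' + layer i' j' :=
      mul_left_cancel₀ hh (h2.symm.trans h2')
    exact_mod_cast this
  clear hx hx' h0 h2 h0' h2'
  fin_cases i <;> fin_cases j <;> fin_cases i' <;> fin_cases j' <;>
    simp [offset, layer] at hoffset hlayer ⊢ <;> omega

lemma countable_V (a h : ℝ) (i j : Fin 2) : (V a h i j).Countable := by
  refine (countable_range fun t : ℤ × ℤ × ℤ =>
    vec (a * ((-1 : ℝ) ^ ((i : ℕ) + 1) * (if j = 1 then (1 : ℝ) else 0) + (3 / 2) * t.1))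
      (a * ((√3 / 2) * t.1 + √3 * t.2.1))
      (h * (2 * t.2.2 + (if i ≠ j then (1 : ℝ) else 0)))).mono ?_
  rintro x ⟨k, l, n, rfl⟩
  exact ⟨(k, l, n), rfl⟩

lemma w_eq_vec (a : ℝ) (i : Fin 2) (k : Fin 3) :
    w a i k = vec (a * ((-1) ^ (i : ℕ) * ![1, -1 / 2, -1 / 2] k))
      (a * ((-1) ^ (i : ℕ) * ![0, √3 / 2, -(√3 / 2)] k)) 0 := by
  have h2 : 2 * π / 3 = π - π / 3 := by ring
  have h4 : 2 * 2 * π / 3 = π / 3 + π := by ring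
  fin_cases i <;> fin_cases k <;>
    simp [w, cos_add_pi, sin_add_pi, h2, h4, cos_pi_sub, sin_pi_sub, neg_div]

lemma norm_w (ha : 0 ≤ a) (i : Fin 2) (k : Fin 3) : ‖w a i k‖ = a := by
  rw [w, norm_vec, mul_pow, mul_pow, ← mul_add, cos_sq_add_sin_sq]
  simp [sqrt_sq ha]

lemma norm_vec_zero_zero (z : ℝ) : ‖vec 0 0 z‖ = |z| := by
  simp [norm_vec, sqrt_sq_eq_abs]

lemma add_w_mem_V (hx : x ∈ V a h i j) (k : Fin 3) : x + w a i k ∈ V a h (1 - i) (1 - j) := by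
  obtain ⟨m, l, n, h0, h1, h2⟩ := mem_V_iff.1 hx
  refine mem_V_iff.2 ⟨m + (if k = 0 then 0 else if i = 0 then -1 else 1),
    l + (if k = 1 then (if i = 0 then 1 else -1) else 0), n, ?_, ?_, ?_⟩
  · rw [PiLp.add_apply, h0, w_eq_vec, vec_apply_zero]
    fin_cases i <;> fin_cases j <;> fin_cases k <;> simp [offset] <;> ring
  · rw [PiLp.add_apply, h1, w_eq_vec, vec_apply_one]
    fin_cases i <;> fin_cases k <;> simp <;> ring
  · rw [PiLp.add_apply, h2, w_eq_vec, vec_apply_two]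
    fin_cases i <;> fin_cases j <;> simp [layer]

lemma add_vec_mem_V (hx : x ∈ V a h i 0) {z : ℝ} (hz : z = h ∨ z = -h) :
    x + vec 0 0 z ∈ V a h (1 - i) 0 := by
  obtain ⟨k, l, n, h0, h1, h2⟩ := mem_V_iff.1 hx
  have hlayer : (layer (1 - i) 0 : ℝ) = 1 - layer i 0 := by fin_cases i <;> simp [layer]
  rcases hz with rfl | rfl
  · refine mem_V_iff.2 ⟨k, l, n + layer i 0, by simpa [offset] using h0, by simpa using h1, ?_⟩
    rw [PiLp.add_apply, h2, vec_apply_two, hlayer]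
    push_cast
    ring
  · refine mem_V_iff.2 ⟨k, l, n + layer i 0 - 1, by simpa [offset] using h0,
      by simpa using h1, ?_⟩
    rw [PiLp.add_apply, h2, vec_apply_two, hlayer]
    push_cast
    ring

end Lattice

section Transition

variable {a h p α : ℝ} {q : Fin 2 → Fin 2 → Fin 3 → ℝ}

/-- The jumps of the walk from a vertex of horizontal type `i`: up and down, then the three
horizontal ones. The vertical jumps are listed even at the types `(i, 1)`, where they get
weight zero. -/
def move (a h : ℝ) (i : Fin 2) : Fin 2 ⊕ Fin 3 → E :=
  Sum.elim ![vec 0 0 h, vec 0 0 (-h)] (w a i)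

/-- The probability of each `move` from a vertex of type `(i, j)`. -/
def weight (p α : ℝ) (q : Fin 2 → Fin 2 → Fin 3 → ℝ) (i j : Fin 2) : Fin 2 ⊕ Fin 3 → ℝ :=
  Sum.elim (if j = 0 then ![α * p, (1 - α) * p] else 0) (q i j)

/-- The second index of the type reached by a `move` from a vertex of type `(i, j)`; the first
one is always `1 - i`. -/
def target (j : Fin 2) : Fin 2 ⊕ Fin 3 → Fin 2 :=
  Sum.elim (fun _ => j) (fun _ => 1 - j)

/-- The mean of `f` after one step of the walk from the vertex `x` of type `(i, j)`. -/
def stepMean (a h p α : ℝ) (q : Fin 2 → Fin 2 → Fin 3 → ℝ) (i j : Fin 2) (f : E → ℝ)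
    (x : E) : ℝ :=
  ∑ k, weight p α q i j k * f (x + move a h i k)

/-- The mean displacement of the walk at a vertex of type `(i, j)`. -/
def drift (a h p α : ℝ) (q : Fin 2 → Fin 2 → Fin 3 → ℝ) (i j : Fin 2) : E :=
  ∑ k, weight p α q i j k • move a h i k

/-- The asymptotic velocity of the walk. -/
def velocity (a h p α : ℝ) (q : Fin 2 → Fin 2 → Fin 3 → ℝ) : E :=
  muG a h p α q + (p / (2 - p)) • mG a h p α q

lemma norm_move_le (ha : 0 ≤ a) (hh : 0 ≤ h) (i : Fin 2) (k : Fin 2 ⊕ Fin 3) :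
    ‖move a h i k‖ ≤ max a h := by
  rcases k with k | k
  · fin_cases k <;> simp [move, norm_vec_zero_zero, abs_of_nonneg hh]
  · simp [move, norm_w ha]

lemma sum_weight_mul_comp_target (hq0 : ∀ i, q i 0 0 + q i 0 1 + q i 0 2 = 1 - p)
    (hq1 : ∀ i, q i 1 0 + q i 1 1 + q i 1 2 = 1) (G : Fin 2 → ℝ) (i j : Fin 2) :
    ∑ k, weight p α q i j k * G (target j k) =
      if j = 0 then p * G 0 + (1 - p) * G 1 else G 0 := by
  fin_cases j
  · trans p * G 0 + (q i 0 0 + q i 0 1 + q i 0 2) * G 1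
    · simp [weight, target, Fin.sum_univ_three]
      ring
    · simp [hq0]
  · trans (q i 1 0 + q i 1 1 + q i 1 2) * G 0
    · simp [weight, target, Fin.sum_univ_three]
      ring
    · simp [hq1]

lemma sum_weight (hq0 : ∀ i, q i 0 0 + q i 0 1 + q i 0 2 = 1 - p)
    (hq1 : ∀ i, q i 1 0 + q i 1 1 + q i 1 2 = 1) (i j : Fin 2) :
    ∑ k, weight p α q i j k = 1 := by
  simpa using sum_weight_mul_comp_target (α := α) hq0 hq1 (fun _ => 1) i j

/-- The stationary law of the type is proportional to `(1, 1 - p)` in its second index. -/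
lemma sum_drift_eq_smul_velocity (hp : p ≠ 2) (hq0 : ∀ i, q i 0 0 + q i 0 1 + q i 0 2 = 1 - p)
    (hq1 : ∀ i, q i 1 0 + q i 1 1 + q i 1 2 = 1) :
    ∑ i, (drift a h p α q i 0 + (1 - p) • drift a h p α q i 1) =
      (2 * (2 - p)) • velocity a h p α q := by
  have hp2 : 2 - p ≠ 0 := sub_ne_zero.2 hp.symm
  have h0 (i : Fin 2) : q i 0 0 = 1 - p - q i 0 1 - q i 0 2 := by linarith [hq0 i]
  have h1 (i : Fin 2) : q i 1 0 = 1 - q i 1 1 - q i 1 2 := by linarith [hq1 i]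
  ext r
  fin_cases r <;>
    simp [drift, weight, move, w_eq_vec, velocity, muG, mG, uu, vv, Fin.sum_univ_three, h0, h1] <;>
    field_simp <;> ring

/-- A solution of the Poisson equation of the type process, with drifts `d` of stationary mean `c`.
It is normalized to vanish at `(1, 0)`; the equations at `(i, 1)` then express its values there
through those at `(1 - i, 0)`, and the one at `(0, 0)` determines the remaining unknown. -/
def corrector (p c : ℝ) (d : Fin 2 → Fin 2 → ℝ) : Fin 2 → Fin 2 → ℝ :=
  let g := (d 0 0 + (1 - p) * d 1 1 - (2 - p) * c) / p
  ![![g, d 0 1 - c], ![0, g + d 1 1 - c]]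

lemma corrector_poisson {c : ℝ} {d : Fin 2 → Fin 2 → ℝ} (hp : p ≠ 0)
    (hd : ∑ i, (d i 0 + (1 - p) * d i 1) = 2 * (2 - p) * c) (i j : Fin 2) :
    (d i j + if j = 0 then p * corrector p c d (1 - i) 0 + (1 - p) * corrector p c d (1 - i) 1
      else corrector p c d (1 - i) 0) = corrector p c d i j + c := by
  rw [Fin.sum_univ_two] at hd
  fin_cases i <;> fin_cases j <;> simp [corrector] <;> field_simp <;> linarith

/-- The function equal to `G i j` on the vertices of type `(i, j)`, and to `0` off the lattice. -/
def typeFun (a h : ℝ) (G : Fin 2 → Fin 2 → ℝ) (x : E) : ℝ :=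
  ∑ i, ∑ j, (V a h i j).indicator (fun _ => G i j) x

lemma measurable_typeFun (a h : ℝ) (G : Fin 2 → Fin 2 → ℝ) : Measurable (typeFun a h G) :=
  Finset.measurable_fun_sum _ fun i _ => Finset.measurable_fun_sum _ fun j _ =>
    measurable_const.indicator (countable_V a h i j).measurableSet

lemma abs_typeFun_le (a h : ℝ) (G : Fin 2 → Fin 2 → ℝ) (x : E) :
    |typeFun a h G x| ≤ ∑ i, ∑ j, |G i j| :=
  (Finset.abs_sum_le_sum_abs _ _).trans <| Finset.sum_le_sum fun i _ =>
    (Finset.abs_sum_le_sum_abs _ _).trans <| Finset.sum_le_sum fun j _ =>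
      norm_indicator_le_norm_self (fun _ => G i j) x

lemma indicator_V_of_mem (ha : a ≠ 0) (hh : h ≠ 0) {i j : Fin 2} {x : E} (hx : x ∈ V a h i j)
    (c : ℝ) (i' j' : Fin 2) :
    (V a h i' j').indicator (fun _ => c) x = if i' = i ∧ j' = j then c else 0 := by
  split_ifs with hij
  · obtain ⟨rfl, rfl⟩ := hij
    exact indicator_of_mem hx _
  · exact indicator_of_notMem (fun hx' => hij (eq_of_mem_V_of_mem_V ha hh hx' hx)) _

lemma typeFun_of_mem (ha : a ≠ 0) (hh : h ≠ 0) (G : Fin 2 → Fin 2 → ℝ) {i j : Fin 2} {x : E}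
    (hx : x ∈ V a h i j) : typeFun a h G x = G i j := by
  simp [typeFun, indicator_V_of_mem ha hh hx, ite_and]

lemma weight_mul_typeFun_add_move (ha : a ≠ 0) (hh : h ≠ 0) (G : Fin 2 → Fin 2 → ℝ)
    {i j : Fin 2} {x : E} (hx : x ∈ V a h i j) (k : Fin 2 ⊕ Fin 3) :
    weight p α q i j k * typeFun a h G (x + move a h i k) =
      weight p α q i j k * G (1 - i) (target j k) := by
  rcases k with k | k
  · obtain rfl | hj : j = 0 ∨ j = 1 := by fin_cases j <;> simp
    · congr 1
      fin_cases k
      · exact typeFun_of_mem ha hh G (add_vec_mem_V hx (.inl rfl))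
      · exact typeFun_of_mem ha hh G (add_vec_mem_V hx (.inr rfl))
    · simp [weight, hj]
  · congr 1
    exact typeFun_of_mem ha hh G (add_w_mem_V hx k)

/-- The `r`-th coordinate, corrected by a function of the type so as to increase by the constant
`velocity a h p α q r` on average at each step of the walk. -/
def correctedCoord (a h p α : ℝ) (q : Fin 2 → Fin 2 → Fin 3 → ℝ) (r : Fin 3) (x : E) : ℝ :=
  x r + typeFun a h
    (corrector p (velocity a h p α q r) fun i j => drift a h p α q i j r) x

variable (a h p α q) in
lemma measurable_correctedCoord (r : Fin 3) : Measurable (correctedCoord a h p α q r) :=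
  (by fun_prop : Measurable fun x : E => x r).add (measurable_typeFun a h _)

variable (a h p α q) in
lemma exists_abs_correctedCoord_sub_le (r : Fin 3) :
    ∃ B, ∀ x, |correctedCoord a h p α q r x - x r| ≤ B :=
  ⟨_, fun x => by
    rw [correctedCoord, add_sub_cancel_left]
    exact abs_typeFun_le a h _ x⟩

lemma stepMean_correctedCoord (ha : a ≠ 0) (hh : h ≠ 0) (hp0 : p ≠ 0) (hp2 : p ≠ 2)
    (hq0 : ∀ i, q i 0 0 + q i 0 1 + q i 0 2 = 1 - p)
    (hq1 : ∀ i, q i 1 0 + q i 1 1 + q i 1 2 = 1) (r : Fin 3) {i j : Fin 2} {x : E}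
    (hx : x ∈ V a h i j) :
    stepMean a h p α q i j (correctedCoord a h p α q r) x =
      correctedCoord a h p α q r x + velocity a h p α q r := by
  set c := velocity a h p α q r with hc
  set d : Fin 2 → Fin 2 → ℝ := fun i j => drift a h p α q i j r with hd
  have hmean : ∑ i, (d i 0 + (1 - p) * d i 1) = 2 * (2 - p) * c := by
    simpa [-Fin.sum_univ_two, WithLp.ofLp_sum, Finset.sum_apply] using
      congr($(sum_drift_eq_smul_velocity (a := a) (h := h) (α := α) hp2 hq0 hq1) r)
  calc stepMean a h p α q i j (correctedCoord a h p α q r) x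
      = (∑ k, weight p α q i j k) * x r + ∑ k, weight p α q i j k * move a h i k r +
          ∑ k, weight p α q i j k * typeFun a h (corrector p c d) (x + move a h i k) := by
        simp only [stepMean, correctedCoord, PiLp.add_apply, mul_add, Finset.sum_add_distrib,
          Finset.sum_mul, hc, hd]
    _ = x r + (d i j + ∑ k, weight p α q i j k * corrector p c d (1 - i) (target j k)) := by
        simp_rw [weight_mul_typeFun_add_move ha hh _ hx]
        simp [sum_weight hq0 hq1, hd, drift, add_assoc]
    _ = x r + (corrector p c d i j + c) := by
        rw [sum_weight_mul_comp_target hq0 hq1, corrector_poisson hp0 hmean]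
    _ = correctedCoord a h p α q r x + c := by
        rw [correctedCoord, typeFun_of_mem ha hh _ hx, add_assoc]

end Transition

section Walk

namespace IsRWG

variable {Ω : Type} {mΩ : MeasurableSpace Ω} {P : Measure Ω} {a h p α : ℝ}
  {q : Fin 2 → Fin 2 → Fin 3 → ℝ} {S : ℕ → Ω → E} {F : ℕ → MeasurableSpace Ω}

lemma measurable_increment (hRW : IsRWG P a h p α q S F) {k n : ℕ} (hkn : k < n) :
    Measurable[F n] fun ω => S (k + 1) ω - S k ω := by
  have hpi : Measurable[F n] fun ω (k : Fin n) => S ((k : ℕ) + 1) ω - S (k : ℕ) ω :=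
    hRW.hF n ▸ comap_measurable _
  exact (measurable_pi_apply (⟨k, hkn⟩ : Fin n)).comp hpi

lemma filtration_le (hRW : IsRWG P a h p α q S F) (n : ℕ) : F n ≤ mΩ := by
  rw [hRW.hF n]
  exact Measurable.comap_le <| measurable_pi_lambda _ fun k =>
    (hRW.hSmeas _).sub (hRW.hSmeas _)

/-- The natural filtration `F` of the walk, as a bundled `Filtration`. -/
def filtration (hRW : IsRWG P a h p α q S F) : Filtration ℕ mΩ where
  seq := F
  mono' m n hmn := by
    have hrestrict : Measurable fun (y : Fin n → E) (k : Fin m) => y (k.castLE hmn) := by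
      fun_prop
    rw [hRW.hF m, hRW.hF n]
    exact (hrestrict.comp <| comap_measurable fun ω (k : Fin n) =>
      S ((k : ℕ) + 1) ω - S (k : ℕ) ω).comap_le
  le' := hRW.filtration_le

lemma measurable_position (hRW : IsRWG P a h p α q S F) (n : ℕ) : Measurable[F n] (S n) := by
  have hsum : S n = fun ω => ∑ k ∈ Finset.range n, (S (k + 1) ω - S k ω) := by
    ext1 ω
    rw [Finset.sum_range_sub (S · ω), hRW.hS0, sub_zero]
  rw [hsum]
  exact Finset.measurable_fun_sum _ fun k hk =>
    hRW.measurable_increment (Finset.mem_range.1 hk)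

lemma condExp_eq_stepMean_of_bounded (hRW : IsRWG P a h p α q S F) {f : E → ℝ}
    (hf : Measurable f) (hfb : ∃ C, ∀ x, |f x| ≤ C) (n : ℕ) :
    ∀ᵐ ω ∂P, ∀ i j, S n ω ∈ V a h i j →
      P[fun ω => f (S (n + 1) ω) | F n] ω = stepMean a h p α q i j f (S n ω) := by
  filter_upwards [hRW.hTrans n f hf hfb] with ω hω i j hx
  simp only [hω, indicator_V_of_mem hRW.ha.ne' hRW.hh.ne' hx]
  fin_cases i <;> fin_cases j <;>
    simp [stepMean, weight, move, Fintype.sum_sum_type, Fin.sum_univ_three]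

lemma ae_exists_mem_V (hRW : IsRWG P a h p α q S F) (n : ℕ) :
    ∀ᵐ ω ∂P, ∃ i j, S n ω ∈ V a h i j := by
  have := hRW.prob
  filter_upwards [hRW.hTrans n (fun _ => 1) measurable_const ⟨1, by simp⟩] with ω hω
  rw [condExp_const (hRW.filtration_le n)] at hω
  by_contra! hne
  simp [hne] at hω

lemma ae_exists_eq_add_move_of_mem (hRW : IsRWG P a h p α q S F) (n : ℕ) {i j : Fin 2} {x : E}
    (hx : x ∈ V a h i j) :
    ∀ᵐ ω ∂P, S n ω = x → ∃ k, S (n + 1) ω = x + move a h i k := by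
  have := hRW.prob
  set f : E → ℝ := (range fun k => x + move a h i k)ᶜ.indicator fun _ => 1 with hf
  have hfm : Measurable f := measurable_const.indicator (finite_range _).measurableSet.compl
  have hf1 (y : E) : |f y| ≤ 1 := by
    simpa using norm_indicator_le_norm_self (fun _ => (1 : ℝ)) y
  have hmean : stepMean a h p α q i j f x = 0 :=
    Finset.sum_eq_zero fun k _ => by simp [hf]
  have hs : MeasurableSet[F n] {ω | S n ω = x} :=
    hRW.measurable_position n (measurableSet_singleton x)
  have hfi : Integrable (fun ω => f (S (n + 1) ω)) P :=
    .of_bound (hfm.comp (hRW.hSmeas _)).aestronglyMeasurable 1 (.of_forall fun _ => hf1 _)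
  have hint : ∫ ω in {ω | S n ω = x}, f (S (n + 1) ω) ∂P = 0 := by
    rw [← setIntegral_condExp (hRW.filtration_le n) hfi hs]
    refine setIntegral_eq_zero_of_ae_eq_zero ?_
    filter_upwards [hRW.condExp_eq_stepMean_of_bounded hfm ⟨1, hf1⟩ n] with ω hω hSx
    rw [hω i j (hSx ▸ hx), hSx, hmean]
  rw [integral_eq_zero_iff_of_nonneg
    (fun _ => indicator_nonneg (fun _ _ => zero_le_one) _) hfi.integrableOn] at hint
  filter_upwards [(ae_restrict_iff' (hRW.filtration_le n _ hs)).1 hint] with ω hω hSx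
  by_contra hne
  have hzero : f (S (n + 1) ω) = 0 := hω hSx
  rw [hf, indicator_of_mem (fun ⟨k, hk⟩ => hne ⟨k, hk.symm⟩)] at hzero
  exact one_ne_zero hzero

lemma ae_exists_eq_add_move (hRW : IsRWG P a h p α q S F) (n : ℕ) :
    ∀ᵐ ω ∂P, ∃ i k, S (n + 1) ω = S n ω + move a h i k := by
  have hV (i j : Fin 2) := (ae_ball_iff (countable_V a h i j)).2 fun x hx =>
    hRW.ae_exists_eq_add_move_of_mem n hx
  filter_upwards [hRW.ae_exists_mem_V n, ae_all_iff.2 fun i => ae_all_iff.2 (hV i)]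
    with ω ⟨i, j, hx⟩ hω
  exact ⟨i, hω i j _ hx rfl⟩

lemma ae_norm_le (hRW : IsRWG P a h p α q S F) (n : ℕ) :
    ∀ᵐ ω ∂P, ‖S n ω‖ ≤ n * max a h := by
  induction n with
  | zero => exact .of_forall fun ω => by simp [hRW.hS0]
  | succ n ih =>
    filter_upwards [ih, hRW.ae_exists_eq_add_move n] with ω hω ⟨i, k, hmove⟩
    calc ‖S (n + 1) ω‖ ≤ ‖S n ω‖ + ‖move a h i k‖ := hmove ▸ norm_add_le _ _
      _ ≤ n * max a h + max a h := add_le_add hω (norm_move_le hRW.ha.le hRW.hh.le i k)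
      _ = (n + 1 : ℕ) * max a h := by push_cast; ring

variable {f : E → ℝ}

lemma integrable_comp_position (hRW : IsRWG P a h p α q S F) (hf : Measurable f)
    (hfb : ∀ R, ∃ C, ∀ x, ‖x‖ ≤ R → |f x| ≤ C) (n : ℕ) :
    Integrable (fun ω => f (S n ω)) P := by
  have := hRW.prob
  obtain ⟨C, hC⟩ := hfb (n * max a h)
  refine .of_bound (hf.comp (hRW.hSmeas n)).aestronglyMeasurable C ?_
  filter_upwards [hRW.ae_norm_le n] with ω hω using hC _ hω

lemma condExp_eq_stepMean (hRW : IsRWG P a h p α q S F) (hf : Measurable f)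
    (hfb : ∀ R, ∃ C, ∀ x, ‖x‖ ≤ R → |f x| ≤ C) (n : ℕ) :
    ∀ᵐ ω ∂P, ∀ i j, S n ω ∈ V a h i j →
      P[fun ω => f (S (n + 1) ω) | F n] ω = stepMean a h p α q i j f (S n ω) := by
  set R := n * max a h + max a h with hR
  -- Up to time `n + 1` the walk stays in a ball, outside of which `f` may be truncated.
  set g := (Metric.closedBall (0 : E) R).indicator f
  have hgf {x : E} (hx : ‖x‖ ≤ R) : g x = f x :=
    indicator_of_mem (mem_closedBall_zero_iff.2 hx) f
  have hgm : Measurable g := hf.indicator Metric.isClosed_closedBall.measurableSet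
  have hgb : ∃ C, ∀ x, |g x| ≤ C := by
    obtain ⟨C, hC⟩ := hfb R
    refine ⟨|C|, fun x => ?_⟩
    by_cases hx : ‖x‖ ≤ R
    · exact hgf hx ▸ (hC x hx).trans (le_abs_self C)
    · simp [g, hx]
  have hcongr : (fun ω => f (S (n + 1) ω)) =ᵐ[P] fun ω => g (S (n + 1) ω) := by
    filter_upwards [hRW.ae_norm_le (n + 1)] with ω hω
    refine (hgf (hω.trans_eq ?_)).symm
    rw [hR]; push_cast; ring
  filter_upwards [condExp_congr_ae (m := F n) hcongr, hRW.ae_norm_le n,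
    hRW.condExp_eq_stepMean_of_bounded hgm hgb n] with ω hfg hω hmean i j hx
  rw [hfg, hmean i j hx]
  refine Finset.sum_congr rfl fun k _ => ?_
  rw [hgf ((norm_add_le _ _).trans (add_le_add hω (norm_move_le hRW.ha.le hRW.hh.le i k)))]

lemma martingale_sub_natCast_mul (hRW : IsRWG P a h p α q S F) (hf : Measurable f)
    (hfb : ∀ R, ∃ C, ∀ x, ‖x‖ ≤ R → |f x| ≤ C) {c : ℝ}
    (hfc : ∀ i j, ∀ x ∈ V a h i j, stepMean a h p α q i j f x = f x + c) :
    Martingale (fun n ω => f (S n ω) - n * c) hRW.filtration P := by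
  have := hRW.prob
  have hfi := hRW.integrable_comp_position hf hfb
  refine martingale_nat
    (fun n => ((hf.comp (hRW.measurable_position n)).sub_const _).stronglyMeasurable)
    (fun n => (hfi n).sub (integrable_const _)) fun n => ?_
  filter_upwards [condExp_sub (hfi (n + 1)) (integrable_const ((n + 1 : ℕ) * c)) (F n),
    hRW.condExp_eq_stepMean hf hfb n, hRW.ae_exists_mem_V n] with ω hsub hmean ⟨i, j, hx⟩
  refine Eq.symm (hsub.trans ?_)
  rw [Pi.sub_apply, hmean i j hx, hfc i j _ hx, condExp_const (hRW.filtration_le n)]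
  push_cast
  ring

lemma ae_isBigO_sub_natCast_mul (hRW : IsRWG P a h p α q S F) (hf : Measurable f)
    (hfb : ∀ R, ∃ C, ∀ x, ‖x‖ ≤ R → |f x| ≤ C) {c K : ℝ}
    (hfK : ∀ x i k, |f (x + move a h i k) - f x| ≤ K)
    (hfc : ∀ i j, ∀ x ∈ V a h i j, stepMean a h p α q i j f x = f x + c) :
    ∀ᵐ ω ∂P, (fun n : ℕ => f (S n ω) - n * c) =O[atTop] fun n : ℕ => √(n * log n) := by
  have := hRW.prob
  refine ae_isBigO_sqrt_mul_log_of_martingale (K := (K + |c|).toNNReal)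
    (hRW.martingale_sub_natCast_mul hf hfb hfc) fun n => ?_
  filter_upwards [hRW.ae_exists_eq_add_move n] with ω ⟨i, k, hmove⟩
  calc |f (S (n + 1) ω) - (n + 1 : ℕ) * c - (f (S n ω) - n * c)|
      = |(f (S n ω + move a h i k) - f (S n ω)) - c| := by
        rw [hmove]; push_cast; ring_nf
    _ ≤ K + |c| := (abs_sub _ _).trans (add_le_add_left (hfK _ i k) _)
    _ ≤ (K + |c|).toNNReal := le_coe_toNNReal _

lemma ae_isBigO_coord_sub (hRW : IsRWG P a h p α q S F) (hp : p ≠ 0) (r : Fin 3) :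
    ∀ᵐ ω ∂P, (fun n : ℕ => S n ω r - n * velocity a h p α q r) =O[atTop]
      fun n : ℕ => √(n * log n) := by
  set φ := correctedCoord a h p α q r
  obtain ⟨B, hB⟩ := exists_abs_correctedCoord_sub_le a h p α q r
  have hcoord (x : E) : |x r| ≤ ‖x‖ := PiLp.norm_apply_le x r
  have hbdd (R : ℝ) : ∃ C, ∀ x, ‖x‖ ≤ R → |φ x| ≤ C :=
    ⟨B + R, fun x hx =>
      calc |φ x| = |(φ x - x r) + x r| := by rw [sub_add_cancel]
        _ ≤ B + R := (abs_add_le _ _).trans (add_le_add (hB x) ((hcoord x).trans hx))⟩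
  have hincr (x : E) (i : Fin 2) (k : Fin 2 ⊕ Fin 3) :
      |φ (x + move a h i k) - φ x| ≤ max a h + 2 * B := by
    have hmove := (hcoord _).trans (norm_move_le hRW.ha.le hRW.hh.le i k)
    have hx := hB x
    have hx' := hB (x + move a h i k)
    rw [PiLp.add_apply] at hx'
    rw [abs_le] at *
    constructor <;> linarith
  filter_upwards [hRW.ae_isBigO_sub_natCast_mul (measurable_correctedCoord a h p α q r) hbdd hincr
    fun i j x hx => stepMean_correctedCoord hRW.ha.ne' hRW.hh.ne' hp (by linarith [hRW.hp1])
      hRW.hqsum0 hRW.hqsum1 r hx] with ω hω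
  have hcorr : (fun n => φ (S n ω) - S n ω r) =O[atTop] fun n : ℕ => √(n * log n) :=
    (Asymptotics.IsBigO.of_bound' (.of_forall fun n => (hB _).trans (le_abs_self B))).trans
      (isBigO_const_sqrt_natCast_mul_log B)
  exact (hω.sub hcorr).congr_left fun n => by ring

theorem ae_isBigO_sub_smul_velocity (hRW : IsRWG P a h p α q S F) (hp : p ≠ 0) :
    ∀ᵐ ω ∂P, (fun n : ℕ => S n ω - (n : ℝ) • velocity a h p α q) =O[atTop]
      fun n : ℕ => √(n * log n) := by
  filter_upwards [ae_all_iff.2 (hRW.ae_isBigO_coord_sub hp)] with ω hω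
  exact ((EuclideanSpace.equiv (Fin 3) ℝ).isBigO_comp_rev _ _).trans (Asymptotics.isBigO_pi.2 hω)

end IsRWG

end Walk

end RWG

theorem rwg_slln_rate {Ω : Type} [MeasurableSpace Ω] (P : Measure Ω)
    (a h p α : ℝ) (q : Fin 2 → Fin 2 → Fin 3 → ℝ)
    (S : ℕ → Ω → RWG.E) (F : ℕ → MeasurableSpace Ω)
    (hRW : RWG.IsRWG P a h p α q S F) (hp : 0 < p) :
    ∀ᵐ ω ∂P, ∃ C > (0 : ℝ), ∃ N : ℕ, ∀ n ≥ N,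
      ‖(n : ℝ)⁻¹ • S n ω - RWG.muG a h p α q - (p / (2 - p)) • RWG.mG a h p α q‖ ^ 2 ≤
        C * Real.log n / n := by
  filter_upwards [hRW.ae_isBigO_sub_smul_velocity hp.ne'] with ω hω
  obtain ⟨C, hC, hbound⟩ := hω.exists_pos
  obtain ⟨N, hN⟩ := eventually_atTop.1 hbound.bound
  refine ⟨C ^ 2, by positivity, max N 1, fun n hn => ?_⟩
  have hn0 : (0 : ℝ) < n := by exact_mod_cast (le_max_right N 1).trans hn
  have hlog : 0 ≤ n * log n := mul_nonneg hn0.le (log_natCast_nonneg n)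
  calc ‖(n : ℝ)⁻¹ • S n ω - RWG.muG a h p α q - (p / (2 - p)) • RWG.mG a h p α q‖ ^ 2
      = ‖(n : ℝ)⁻¹ • (S n ω - (n : ℝ) • RWG.velocity a h p α q)‖ ^ 2 := by
        rw [smul_sub, inv_smul_smul₀ hn0.ne', RWG.velocity, sub_sub]
    _ = (n : ℝ)⁻¹ ^ 2 * ‖S n ω - (n : ℝ) • RWG.velocity a h p α q‖ ^ 2 := by
        rw [norm_smul, mul_pow, norm_inv, norm_natCast]
    _ ≤ (n : ℝ)⁻¹ ^ 2 * (C * ‖√(n * log n)‖) ^ 2 := by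
        gcongr
        exact hN n ((le_max_left N 1).trans hn)
    _ = C ^ 2 * log n / n := by
        rw [mul_pow, norm_of_nonneg (sqrt_nonneg _), sq_sqrt hlog]
        field_simp
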